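/- Let F be a finite field. For all r ∈ ℕ and all t < k there exists n with the following property: for every n-dimensional vector space X over F and every r-coloring of the proper affine t-subspaces of X, there exists a proper affine k-subspace W ⊆ X such that every affine t-subspace of W is a proper affine t-subspace of X and all affine t-subspaces of W receive the same color. -/

import Mathlib

open Module Submodule

/-- The affine subspace (coset) `U + u`, as a subset. -/
def affineCoset {F X : Type*} [Field F] [AddCommGroup X] [Module F X]
    (U : Submodule F X) (u : X) : Set X :=
  {x | x - u ∈ U}

/-!
Induction on `t`, with a separate target dimension `a c` for each color `c`. The `0`-flats are the
points, where the claim is the multidimensional Hales–Jewett theorem. For `(t + 1)`-flats, induct on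
the sum of the dimensions `a c`, and let `V` be a space that works for the preceding sum. A
`(t + 1)`-flat of `V × F` either is a graph over its projection to `V` or is a cylinder `P × F`
over a `t`-flat `P`. The two kinds are controlled in turn, starting from a space `U` that works for
`t`-flats and target dimension `dim V`:
* by Hales–Jewett over the alphabet of affine maps `U → F` (Spencer's trick), `U × F` embeds into
  a large `U × F ^ ι` so that the induced color of a graph only depends on its projection to `U`;
* by the choice of `U`, it contains a copy of `V` over whose `t`-flats all cylinders have one
  color `c`.

Now color the `(t + 1)`-flats of `V` by the color of the graphs over them. A monochromatic flat `W`
of color `c` can be replaced by `W × F`, which gains the one dimension that `a c` asks for, while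
the other colors need no gain.

Proper flats arise by placing the whole space as an affine hyperplane off the origin.
-/

open Set

section AffineFlat

variable {F V V' : Type*} [Field F] [AddCommGroup V] [Module F V] [AddCommGroup V'] [Module F V']

/-- `S` is an affine `t`-subspace (a `t`-flat), viewed as a set of points so that it can be an
argument of a coloring. As `finrank` is `0` in infinite dimension, cosets of infinite-dimensional
subspaces count as `0`-flats. -/
def IsFlat (F : Type*) {V : Type*} [Field F] [AddCommGroup V] [Module F V] (t : ℕ) (S : Set V) :
    Prop :=
  ∃ (U : Submodule F V) (u : V), finrank F U = t ∧ S = affineCoset U u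

lemma mem_affineCoset {U : Submodule F V} {u x : V} : x ∈ affineCoset U u ↔ x - u ∈ U := Iff.rfl

lemma self_mem_affineCoset (U : Submodule F V) (u : V) : u ∈ affineCoset U u := by
  simp [affineCoset]

lemma zero_mem_affineCoset {U : Submodule F V} {u : V} : 0 ∈ affineCoset U u ↔ u ∈ U := by
  simp [affineCoset]

lemma affineCoset_subset_affineCoset {U W : Submodule F V} {u w : V} (hUW : U ≤ W)
    (hu : u ∈ affineCoset W w) : affineCoset U u ⊆ affineCoset W w := fun x hx => by
  simpa [mem_affineCoset] using W.add_mem (hUW hx) hu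

lemma image_affineCoset (φ : V →ᵃ[F] V') (U : Submodule F V) (u : V) :
    φ '' affineCoset U u = affineCoset (U.map φ.linear) (φ u) :=
  congrArg SetLike.coe (AffineSubspace.map_mk' φ u U)

lemma preimage_affineCoset (φ : V →ᵃ[F] V') (U : Submodule F V') (x : V) :
    φ ⁻¹' affineCoset U (φ x) = affineCoset (U.comap φ.linear) x := by
  ext y
  simp [affineCoset, ← vsub_eq_sub]

lemma affineCoset_prod_top (U : Submodule F V) (u : V × V') :
    affineCoset (U.prod ⊤) u = affineCoset U u.1 ×ˢ univ := by
  ext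
  simp [mem_affineCoset]

lemma isFlat_univ : IsFlat F (finrank F V) (univ : Set V) :=
  ⟨⊤, 0, finrank_top F V, by simp [affineCoset]⟩

lemma IsFlat.nonempty {t : ℕ} {S : Set V} (hS : IsFlat F t S) : S.Nonempty := by
  obtain ⟨U, u, -, rfl⟩ := hS
  exact ⟨u, self_mem_affineCoset U u⟩

lemma isFlat_singleton (x : V) : IsFlat F 0 ({x} : Set V) :=
  ⟨⊥, x, finrank_bot F V, by ext; simp [affineCoset, sub_eq_zero]⟩

lemma IsFlat.subsingleton_iff [FiniteDimensional F V] {t : ℕ} {S : Set V} (hS : IsFlat F t S) :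
    S.Subsingleton ↔ t = 0 := by
  obtain ⟨U, u, rfl, rfl⟩ := hS
  rw [Submodule.finrank_eq_zero]
  refine ⟨fun h => (Submodule.eq_bot_iff U).2 fun v hv => ?_, ?_⟩
  · simpa using h (show v + u ∈ affineCoset U u by simpa [affineCoset]) (self_mem_affineCoset U u)
  · rintro rfl x hx y hy
    simp_all [affineCoset, sub_eq_zero]

lemma IsFlat.image {t : ℕ} {S : Set V} (hS : IsFlat F t S) {φ : V →ᵃ[F] V'}
    (hφ : Function.Injective φ) : IsFlat F t (φ '' S) := by
  obtain ⟨U, u, hU, rfl⟩ := hS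
  exact ⟨U.map φ.linear, φ u,
    ((U.equivMapOfInjective _ (φ.linear_injective_iff.2 hφ)).finrank_eq.symm.trans hU),
    image_affineCoset φ U u⟩

lemma IsFlat.preimage {t : ℕ} {S : Set V'} (hS : IsFlat F t S) {φ : V →ᵃ[F] V'}
    (hφ : Function.Injective φ) (hSφ : S ⊆ range φ) : IsFlat F t (φ ⁻¹' S) := by
  obtain ⟨U, u, hU, rfl⟩ := hS
  obtain ⟨x, rfl⟩ := hSφ (self_mem_affineCoset U u)
  have map_comap : (U.comap φ.linear).map φ.linear = U := by
    refine Submodule.map_comap_eq_of_le fun v hv => ?_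
    obtain ⟨y, hy⟩ := hSφ (show v + φ x ∈ affineCoset U (φ x) by simpa [affineCoset])
    exact ⟨y - x, by rw [← vsub_eq_sub, φ.linearMap_vsub, hy, vsub_eq_sub, add_sub_cancel_right]⟩
  refine ⟨U.comap φ.linear, x, ?_, preimage_affineCoset φ U x⟩
  rw [((U.comap φ.linear).equivMapOfInjective _ (φ.linear_injective_iff.2 hφ)).finrank_eq,
    map_comap, hU]

lemma isFlat_range [FiniteDimensional F V] {φ : V →ᵃ[F] V'} (hφ : Function.Injective φ) :
    IsFlat F (finrank F V) (range φ) :=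
  image_univ (f := φ) ▸ isFlat_univ.image hφ

lemma IsFlat.exists_range_eq [FiniteDimensional F V] [FiniteDimensional F V'] {S : Set V'}
    (hS : IsFlat F (finrank F V) S) : ∃ φ : V →ᵃ[F] V', Function.Injective φ ∧ range φ = S := by
  obtain ⟨U, u, hU, rfl⟩ := hS
  let e : V ≃ₗ[F] U := LinearEquiv.ofFinrankEq V U hU.symm
  refine ⟨(U.subtype ∘ₗ e.toLinearMap).toAffineMap + AffineMap.const F V u, fun x y hxy => ?_, ?_⟩
  · simpa using hxy
  · ext z
    exact ⟨fun ⟨x, hx⟩ => by simp [← hx, affineCoset],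
      fun hz => ⟨e.symm ⟨z - u, hz⟩, by simp⟩⟩

lemma finrank_prod_top [FiniteDimensional F V] [FiniteDimensional F V'] (U : Submodule F V) :
    finrank F (U.prod (⊤ : Submodule F V')) = finrank F U + finrank F V' := by
  have h : U.prod (⊤ : Submodule F V') = LinearMap.range (U.subtype.prodMap LinearMap.id) := by
    simp [LinearMap.range_prodMap]
  rw [h, LinearMap.finrank_range_of_inj, finrank_prod]
  exact U.injective_subtype.prodMap Function.injective_id

lemma IsFlat.prod_univ [FiniteDimensional F V] [FiniteDimensional F V'] {t : ℕ} {S : Set V}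
    (hS : IsFlat F t S) : IsFlat F (t + finrank F V') (S ×ˢ (univ : Set V')) := by
  obtain ⟨U, u, rfl, rfl⟩ := hS
  exact ⟨U.prod ⊤, (u, 0), finrank_prod_top U, (affineCoset_prod_top U (u, 0)).symm⟩

lemma eq_map_fst_prod_top {U : Submodule F (V × F)} (hU : (0, 1) ∈ U) :
    U = (U.map (LinearMap.fst F V F)).prod ⊤ := by
  refine le_antisymm (fun p hp => ⟨⟨p, hp, rfl⟩, trivial⟩) ?_
  rintro ⟨x, s⟩ ⟨⟨⟨x, s'⟩, hx, rfl⟩, -⟩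
  simpa using U.add_mem hx (U.smul_mem (s - s') hU)

lemma IsFlat.injOn_fst_or_eq_prod_univ [FiniteDimensional F V] {t : ℕ} {S : Set (V × F)}
    (hS : IsFlat F (t + 1) S) :
    InjOn Prod.fst S ∨ ∃ P : Set V, IsFlat F t P ∧ S = P ×ˢ univ := by
  obtain ⟨U, u, hU, rfl⟩ := hS
  by_cases vertical : (0, 1) ∈ U
  · rw [eq_map_fst_prod_top vertical, finrank_prod_top, finrank_self,
      Nat.add_right_cancel_iff] at hU
    refine .inr ⟨_, ⟨_, u.1, hU, rfl⟩, ?_⟩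
    rw [← affineCoset_prod_top, ← eq_map_fst_prod_top vertical]
  · refine .inl fun x hx y hy hxy => Prod.ext hxy (by_contra fun hne => vertical ?_)
    have hxyU : x - y ∈ U := by simpa using U.sub_mem hx hy
    have hfst : (x - y).1 = 0 := sub_eq_zero.2 hxy
    have hsnd : (x - y).2 ≠ 0 := sub_ne_zero.2 hne
    convert U.smul_mem (x - y).2⁻¹ hxyU using 1
    exact Prod.ext (by simp [hfst]) (inv_mul_cancel₀ hsnd).symm

lemma IsFlat.exists_eq_graph {t : ℕ} {S : Set (V × V')} (hS : IsFlat F t S)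
    (hinj : InjOn Prod.fst S) :
    ∃ g : V →ᵃ[F] V', S = (AffineMap.id F V).prod g '' (Prod.fst '' S) := by
  obtain ⟨U, u, -, rfl⟩ := hS
  have hker : LinearMap.ker (LinearMap.fst F V V' ∘ₗ U.subtype) = ⊥ := by
    refine LinearMap.ker_eq_bot'.2 fun v hv => Subtype.ext ?_
    have hvu : (v : V × V') + u ∈ affineCoset U u := by simp [mem_affineCoset]
    simpa using hinj hvu (self_mem_affineCoset U u) (by simpa using hv)
  obtain ⟨l, hl⟩ := LinearMap.exists_leftInverse_of_injective _ hker
  let g : V →ₗ[F] V' := LinearMap.snd F V V' ∘ₗ U.subtype ∘ₗ l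
  have hg (p : V × V') (hp : p ∈ affineCoset U u) : g (p.1 - u.1) + u.2 = p.2 :=
    eq_sub_iff_add_eq.1
      (congrArg (fun v : U => (v : V × V').2) (LinearMap.congr_fun hl ⟨p - u, hp⟩))
  refine ⟨g.toAffineMap + AffineMap.const F V (u.2 - g u.1), ?_⟩
  rw [image_image]
  refine (image_id _).symm.trans (image_congr fun p hp => Prod.ext rfl ?_)
  simp [← hg p hp]
  abel

lemma injective_id_prod (g : V →ᵃ[F] V') : Function.Injective ((AffineMap.id F V).prod g) :=
  fun _ _ h => congrArg Prod.fst h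

lemma IsFlat.image_fst {t : ℕ} {S : Set (V × V')} (hS : IsFlat F t S) (hinj : InjOn Prod.fst S) :
    IsFlat F t (Prod.fst '' S) := by
  obtain ⟨g, hg⟩ := hS.exists_eq_graph hinj
  rw [← preimage_image_eq (Prod.fst '' S) (injective_id_prod g), ← hg]
  exact hS.preimage (injective_id_prod g) (hg.trans_subset (image_subset_range _ _))

end AffineFlat

section Coloring

variable {F V V' κ : Type*} [Field F] [AddCommGroup V] [Module F V] [AddCommGroup V'] [Module F V']

/-- All `t`-flats contained in `W` receive the color `c`. -/
def IsMonochromatic (F : Type*) {V κ : Type*} [Field F] [AddCommGroup V] [Module F V]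
    (ξ : Set V → κ) (t : ℕ) (c : κ) (W : Set V) : Prop :=
  ∀ ⦃S : Set V⦄, IsFlat F t S → S ⊆ W → ξ S = c

/-- The off-diagonal Ramsey arrow `V → (a)ᵗ`: for every coloring of the `t`-flats of `V` there is a
color `c` and an `a c`-flat all of whose `t`-flats have color `c`. Colorings are defined on all
sets of points, but only their values on `t`-flats matter. -/
def FlatRamsey (F V : Type*) {κ : Type*} [Field F] [AddCommGroup V] [Module F V]
    (t : ℕ) (a : κ → ℕ) : Prop :=
  ∀ ξ : Set V → κ, ∃ c W, IsFlat F (a c) W ∧ IsMonochromatic F ξ t c W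

/-- On flats of `V × F` that are graphs over their projection `P` to `V`, the coloring `η` only
depends on `P`; this is expressed by comparison with the horizontal graph `P × {0}`. -/
def IsVerticallyInvariant (F : Type*) {V κ : Type*} [Field F] [AddCommGroup V] [Module F V]
    (η : Set (V × F) → κ) : Prop :=
  ∀ ⦃t : ℕ⦄ ⦃S : Set (V × F)⦄, IsFlat F t S → InjOn Prod.fst S → η S = η ((Prod.fst '' S) ×ˢ {0})

lemma IsMonochromatic.image {ξ : Set V' → κ} {t : ℕ} {c : κ} {W : Set V} {φ : V →ᵃ[F] V'}
    (hφ : Function.Injective φ) (hW : IsMonochromatic F (fun S => ξ (φ '' S)) t c W) :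
    IsMonochromatic F ξ t c (φ '' W) := by
  intro S hS hSW
  have hSφ : S ⊆ range φ := hSW.trans (image_subset_range φ W)
  rw [← image_preimage_eq_of_subset hSφ]
  exact hW (hS.preimage hφ hSφ) ((preimage_mono hSW).trans_eq (preimage_image_eq W hφ))

lemma isMonochromatic_singleton [FiniteDimensional F V] (ξ : Set V → κ) {t : ℕ} (ht : t ≠ 0) (c : κ)
    (x : V) : IsMonochromatic F ξ t c {x} := fun _ hS hSx =>
  absurd (hS.subsingleton_iff.1 (subsingleton_singleton.anti hSx)) ht

lemma IsMonochromatic.prod_univ [FiniteDimensional F V] {η : Set (V × F) → κ} {t : ℕ} {c : κ}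
    {W : Set V} (hη : IsVerticallyInvariant F η)
    (cylinders : IsMonochromatic F (fun P => η (P ×ˢ univ)) t c W)
    (base : IsMonochromatic F (fun P => η (P ×ˢ {0})) (t + 1) c W) :
    IsMonochromatic F η (t + 1) c (W ×ˢ univ) := by
  intro S hS hSW
  have hfst : Prod.fst '' S ⊆ W := image_subset_iff.2 fun p hp => (hSW hp).1
  rcases hS.injOn_fst_or_eq_prod_univ with hinj | ⟨P, hP, rfl⟩
  · exact (hη hS hinj).trans (base (hS.image_fst hinj) hfst)
  · exact cylinders hP (by rwa [fst_image_prod P univ_nonempty] at hfst)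

lemma IsVerticallyInvariant.comp_prodMap {η : Set (V' × F) → κ} (hη : IsVerticallyInvariant F η)
    {ψ : V →ᵃ[F] V'} (hψ : Function.Injective ψ) :
    IsVerticallyInvariant F fun S => η (ψ.prodMap (AffineMap.id F F) '' S) := by
  intro t S hS hinj
  have hΨ : Function.Injective (ψ.prodMap (AffineMap.id F F)) := hψ.prodMap Function.injective_id
  have hinj' : InjOn Prod.fst (ψ.prodMap (AffineMap.id F F) '' S) := by
    rintro _ ⟨p, hp, rfl⟩ _ ⟨q, hq, rfl⟩ hpq
    rw [hinj hp hq (hψ hpq)]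
  refine (hη (hS.image hΨ) hinj').trans (congrArg η ?_)
  simp only [AffineMap.coe_prodMap, AffineMap.coe_id, prodMap_image_prod, image_singleton,
    image_image, Prod.map_fst, id]

lemma FlatRamsey.of_injective {t : ℕ} {a : κ → ℕ} (hV : FlatRamsey F V t a) {φ : V →ᵃ[F] V'}
    (hφ : Function.Injective φ) : FlatRamsey F V' t a := fun ξ =>
  let ⟨c, W, hW, hmono⟩ := hV fun S => ξ (φ '' S)
  ⟨c, φ '' W, hW.image hφ, hmono.image hφ⟩

lemma FlatRamsey.exists_of_monochromatic_cylinders [FiniteDimensional F V] [DecidableEq κ]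
    {t : ℕ} {a : κ → ℕ} (hV : FlatRamsey F V (t + 1) a) {ξ : Set V' → κ}
    {h : V × F →ᵃ[F] V'} (h_inj : Function.Injective h)
    (hξ : IsVerticallyInvariant F fun S => ξ (h '' S)) {c : κ}
    (cylinders : IsMonochromatic F (fun P => ξ (h '' (P ×ˢ univ))) t c univ) :
    ∃ i W, IsFlat F ((a + Pi.single c 1 : κ → ℕ) i) W ∧ IsMonochromatic F ξ (t + 1) i W := by
  obtain ⟨i, W, hW, base⟩ := hV fun P => ξ (h '' (P ×ˢ {0}))
  obtain rfl | hic := eq_or_ne i c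
  · refine ⟨i, h '' (W ×ˢ univ), ?_, ?_⟩
    · simpa using (hW.prod_univ (V' := F)).image h_inj
    · exact (IsMonochromatic.prod_univ hξ (fun P hP _ => cylinders hP (subset_univ P)) base).image
        h_inj
  · let section₀ : V →ᵃ[F] V × F := (AffineMap.id F V).prod (AffineMap.const F V 0)
    have section_inj : Function.Injective (h.comp section₀) :=
      h_inj.comp (injective_id_prod _)
    have image_section (P : Set V) : h.comp section₀ '' P = h '' (P ×ˢ {0}) := by
      rw [prod_singleton, image_image]
      rfl
    refine ⟨i, h.comp section₀ '' W, ?_, IsMonochromatic.image section_inj ?_⟩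
    · simpa [hic] using hW.image section_inj
    · simpa only [image_section] using base

lemma FlatRamsey.of_apply_eq_zero [FiniteDimensional F V] {t : ℕ} {a : κ → ℕ} (ht : t ≠ 0)
    {c : κ} (hc : a c = 0) : FlatRamsey F V t a := fun ξ =>
  ⟨c, {0}, hc ▸ isFlat_singleton 0, isMonochromatic_singleton ξ ht c 0⟩

lemma FlatRamsey.exists_zero_notMem [FiniteDimensional F V] {t : ℕ} {a : κ → ℕ}
    (hV : FlatRamsey F V t a) (hV' : finrank F V < finrank F V') (ξ : Set V' → κ) :
    ∃ c W, IsFlat F (a c) W ∧ 0 ∉ W ∧ IsMonochromatic F ξ t c W := by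
  have : FiniteDimensional F V' := FiniteDimensional.of_finrank_pos (by lia)
  obtain ⟨e, he⟩ : ∃ e : V × F →ₗ[F] V', Function.Injective e :=
    finrank_le_iff_exists_linearMap.1 (by simpa using hV')
  let j : V →ᵃ[F] V' :=
    e.toAffineMap.comp ((AffineMap.id F V).prod (AffineMap.const F V 1))
  have hj : Function.Injective j := he.comp (injective_id_prod _)
  obtain ⟨c, W, hW, hmono⟩ := hV fun S => ξ (j '' S)
  refine ⟨c, j '' W, hW.image hj, ?_, hmono.image hj⟩
  rintro ⟨x, -, hx⟩
  exact one_ne_zero (congrArg Prod.snd ((map_eq_zero_iff e he).1 hx))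

end Coloring

section HalesJewett

variable {F V W κ ι : Type*} [Field F] [AddCommGroup V] [Module F V] [AddCommGroup W] [Module F W]

/-- The affine map traced out by a combinatorial subspace of `ι → F`. -/
def subspaceMap {η : Type*} (l : Combinatorics.Subspace η F ι) : (η → F) →ᵃ[F] ι → F :=
  AffineMap.pi fun i =>
    (l.idxFun i).elim (AffineMap.const F _) fun e => (LinearMap.proj e).toAffineMap

lemma subspaceMap_apply {η : Type*} (l : Combinatorics.Subspace η F ι) (x : η → F) :
    subspaceMap l x = l x := by
  funext i
  cases hi : l.idxFun i <;>
    simp [subspaceMap, AffineMap.pi_apply, Combinatorics.Subspace.apply_def, hi]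

lemma subspaceMap_injective {η : Type*} (l : Combinatorics.Subspace η F ι) :
    Function.Injective (subspaceMap l) := by
  intro x y hxy
  funext e
  obtain ⟨i, hi⟩ := l.proper e
  simpa only [subspaceMap_apply, Combinatorics.Subspace.apply_inr hi] using congrFun hxy i

/-- The embedding of `V × W` over `V` induced by a combinatorial line `l` of affine maps: the
variable coordinates of `l` carry the `W`-component, and the fixed ones the corresponding maps. -/
def graphMap (l : Combinatorics.Line (V →ᵃ[F] W) ι) : V × W →ᵃ[F] V × (ι → W) :=
  AffineMap.fst.prod <| AffineMap.pi fun i =>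
    (l.idxFun i).elim AffineMap.snd fun g => g.comp AffineMap.fst

lemma graphMap_injective (l : Combinatorics.Line (V →ᵃ[F] W) ι) :
    Function.Injective (graphMap l) := by
  rintro ⟨x, s⟩ ⟨y, s'⟩ hxy
  obtain ⟨i, hi⟩ := l.proper
  have hfst : x = y := congrArg (fun p : V × (ι → W) => p.1) hxy
  refine Prod.ext hfst ?_
  simpa [graphMap, AffineMap.pi_apply, hi] using congrFun (congrArg Prod.snd hxy) i

lemma graphMap_graph (l : Combinatorics.Line (V →ᵃ[F] W) ι) (g : V →ᵃ[F] W) (x : V) :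
    graphMap l (x, g x) = (x, fun i => l g i x) := by
  refine Prod.ext rfl (funext fun i => ?_)
  cases hi : l.idxFun i <;> simp [graphMap, AffineMap.pi_apply, hi]

lemma exists_isVerticallyInvariant [Finite F] [Finite V] [Finite κ] :
    ∃ (ι : Type) (_ : Fintype ι), ∀ ξ : Set (V × (ι → F)) → κ,
      ∃ h : V × F →ᵃ[F] V × (ι → F), Function.Injective h ∧
        IsVerticallyInvariant F fun S => ξ (h '' S) := by
  have : Finite (V →ᵃ[F] F) := DFunLike.finite _
  obtain ⟨ι, hι, hJ⟩ := Combinatorics.Line.exists_mono_in_high_dimension (V →ᵃ[F] F) (Set V → κ)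
  refine ⟨ι, hι, fun ξ => ?_⟩
  obtain ⟨l, c, hl⟩ := hJ fun w P => ξ ((fun x => (x, fun i => w i x)) '' P)
  have color_graph (g : V →ᵃ[F] F) (P : Set V) :
      ξ (graphMap l '' ((AffineMap.id F V).prod g '' P)) = c P := by
    rw [← hl g, image_image]
    exact congrArg ξ (image_congr fun x _ => graphMap_graph l g x)
  refine ⟨graphMap l, graphMap_injective l, fun t S hS hinj => ?_⟩
  obtain ⟨g, hg⟩ := hS.exists_eq_graph hinj
  calc ξ (graphMap l '' S) = c (Prod.fst '' S) := by rw [← color_graph g, ← hg]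
    _ = ξ (graphMap l '' ((Prod.fst '' S) ×ˢ {0})) := by
      rw [← color_graph (AffineMap.const F V 0), prod_singleton]
      rfl

lemma exists_flatRamsey_zero [Finite F] [Finite κ] (k : ℕ) :
    ∃ n, FlatRamsey F (Fin n → F) 0 fun _ : κ => k := by
  obtain ⟨n, hJ⟩ := Combinatorics.Subspace.exists_mono_in_high_dimension_fin F κ (Fin k)
  refine ⟨n, fun ξ => ?_⟩
  obtain ⟨l, c, hl⟩ := hJ fun x => ξ {x}
  refine ⟨c, range (subspaceMap l), ?_, fun S hS hSl => ?_⟩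
  · simpa using isFlat_range (subspaceMap_injective l)
  · obtain ⟨y, rfl⟩ :=
      exists_eq_singleton_iff_nonempty_subsingleton.2 ⟨hS.nonempty, hS.subsingleton_iff.2 rfl⟩
    obtain ⟨x, rfl⟩ := hSl rfl
    rw [subspaceMap_apply]
    exact hl x

end HalesJewett

section Induction

variable {F U V κ : Type*} [Field F] [Finite F] [AddCommGroup U] [Module F U] [Finite U]
  [AddCommGroup V] [Module F V] [FiniteDimensional F V]

lemma FlatRamsey.exists_monochromatic_cylinders [Finite κ] {t : ℕ}
    (hU : FlatRamsey F U t fun _ : κ => finrank F V) :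
    ∃ (ι : Type) (_ : Fintype ι), ∀ ξ : Set (U × (ι → F)) → κ,
      ∃ h : V × F →ᵃ[F] U × (ι → F), Function.Injective h ∧
        IsVerticallyInvariant F (fun S => ξ (h '' S)) ∧
        ∃ c, IsMonochromatic F (fun P => ξ (h '' (P ×ˢ univ))) t c univ := by
  obtain ⟨ι, hι, H⟩ := exists_isVerticallyInvariant (F := F) (V := U) (κ := κ)
  refine ⟨ι, hι, fun ξ => ?_⟩
  obtain ⟨h, h_inj, hξ⟩ := H ξ
  obtain ⟨c, W, hW, hmono⟩ := hU fun P => ξ (h '' (P ×ˢ univ))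
  obtain ⟨ψ, hψ, rfl⟩ := hW.exists_range_eq
  refine ⟨h.comp (ψ.prodMap (AffineMap.id F F)),
    h_inj.comp (hψ.prodMap Function.injective_id), ?_, c, fun P hP _ => ?_⟩
  · simpa only [AffineMap.coe_comp, image_comp] using hξ.comp_prodMap hψ
  · simpa only [AffineMap.coe_comp, image_comp, AffineMap.coe_prodMap, AffineMap.coe_id,
      prodMap_image_prod, image_id] using hmono (hP.image hψ) (image_subset_range ψ P)

lemma exists_flatRamsey_of_sum_eq [Fintype κ] {t : ℕ}
    (diagonal : ∀ k, ∃ n, FlatRamsey F (Fin n → F) t fun _ : κ => k) (N : ℕ) :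
    ∃ n, ∀ a : κ → ℕ, ∑ c, a c = N → FlatRamsey F (Fin n → F) (t + 1) a := by
  classical
  induction N with
  | zero =>
    refine ⟨0, fun a ha ξ => ?_⟩
    exact FlatRamsey.of_apply_eq_zero t.succ_ne_zero
      (Finset.sum_eq_zero_iff.1 ha (ξ ∅) (Finset.mem_univ _)) ξ
  | succ N ih =>
    obtain ⟨m, hm⟩ := ih
    obtain ⟨n, hn⟩ := diagonal m
    rw [← finrank_fin_fun F (n := m)] at hn
    obtain ⟨ι, _, hι⟩ := hn.exists_monochromatic_cylinders
    let e : ((Fin n → F) × (ι → F)) ≃ₗ[F] (Fin (n + Fintype.card ι) → F) :=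
      LinearEquiv.ofFinrankEq _ _ (by simp)
    refine ⟨n + Fintype.card ι, fun a ha =>
      FlatRamsey.of_injective (φ := e.toLinearMap.toAffineMap) (fun ξ => ?_) e.injective⟩
    obtain ⟨h, h_inj, hξ, c, cylinders⟩ := hι ξ
    obtain hc | hc := eq_or_ne (a c) 0
    · exact FlatRamsey.of_apply_eq_zero t.succ_ne_zero hc ξ
    · obtain ⟨b, rfl⟩ : ∃ b, a = b + Pi.single c 1 :=
        le_iff_exists_add'.1 <| update_le_iff.2
          ⟨Nat.one_le_iff_ne_zero.2 hc, fun _ _ => Nat.zero_le _⟩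
      have hb : ∑ i, b i = N := by simpa [Finset.sum_add_distrib] using ha
      exact (hm b hb).exists_of_monochromatic_cylinders h_inj hξ cylinders

lemma exists_flatRamsey [Finite κ] (t k : ℕ) :
    ∃ n, FlatRamsey F (Fin n → F) t fun _ : κ => k := by
  cases nonempty_fintype κ
  induction t generalizing k with
  | zero => exact exists_flatRamsey_zero k
  | succ t ih =>
    obtain ⟨n, hn⟩ := exists_flatRamsey_of_sum_eq ih (Fintype.card κ * k)
    exact ⟨n, hn _ (by simp)⟩

end Induction

/-- Ramsey theorem for proper affine subspaces: over a finite field `F`, for all `r` and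
`t < k` there is `n` such that for every `n`-dimensional vector space `X` over `F` and
every `r`-coloring of the proper affine `t`-subspaces of `X` (cosets `U + u` with
`dim U = t`, `u ∉ U`), there is a proper affine `k`-subspace `W0 + w` of `X` all of whose
affine `t`-subspaces are proper affine `t`-subspaces of `X` and get the same color. -/
theorem proper_affine_ramsey
    (F : Type*) [Field F] [Fintype F] :
    ∀ r t k : ℕ, t < k → ∃ n : ℕ,
      ∀ (X : Type*) [AddCommGroup X] [Module F X],
        finrank F X = n →
        ∀ ξ : Set X → Fin r,
          ∃ (W0 : Submodule F X) (w : X),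
            finrank F W0 = k ∧ w ∉ W0 ∧
            (∀ (U : Submodule F X) (u : X),
              U ≤ W0 → finrank F U = t → u ∈ affineCoset W0 w → u ∉ U) ∧
            (∀ (U U' : Submodule F X) (u u' : X),
              U ≤ W0 → finrank F U = t → u ∈ affineCoset W0 w →
              U' ≤ W0 → finrank F U' = t → u' ∈ affineCoset W0 w →
              ξ (affineCoset U u) = ξ (affineCoset U' u')) := by
  intro r t k _
  obtain ⟨n, hn⟩ := exists_flatRamsey (F := F) (κ := Fin r) t k
  refine ⟨n + 1, fun X _ _ hX ξ => ?_⟩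
  obtain ⟨c, _, ⟨W₀, w, hk, rfl⟩, h0, hmono⟩ := hn.exists_zero_notMem (by simp [hX]) ξ
  have color_eq (U : Submodule F X) (u : X) (hU : U ≤ W₀) (ht : finrank F U = t)
      (hu : u ∈ affineCoset W₀ w) : ξ (affineCoset U u) = c :=
    hmono ⟨U, u, ht, rfl⟩ (affineCoset_subset_affineCoset hU hu)
  refine ⟨W₀, w, hk, fun hw => h0 (zero_mem_affineCoset.2 hw), fun U u hU _ hu huU => h0 ?_, ?_⟩
  · exact affineCoset_subset_affineCoset hU hu (zero_mem_affineCoset.2 huU)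
  · intro U U' u u' hU ht hu hU' ht' hu'
    rw [color_eq U u hU ht hu, color_eq U' u' hU' ht' hu']
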